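/- arXiv:2111.13626 — 2 statements merged into one kernel-verified Lean document; each statement's English description precedes it below -/
import Mathlib

section
/- Fix a finite hypothesis set Θ = {0,…,H−1}, a transition matrix T on Θ such that for every θ there exists θ' with T(θ|θ') > 0, K agents with strictly positive likelihood values L_k(ξ_{k,i}|θ) > 0 for every observation, agent, time, and hypothesis, the fully connected combination matrix a_{ℓk} = 1/K for all ℓ, k, step size γ = K, and common strictly positive initial beliefs μ_{k,0} = μ*_0 for all k. Then for every deterministic observation sequence, the diffusion HMM beliefs coincide with the centralized HMM beliefs at all times: μ_{k,i}(θ) = μ*_i(θ) and η_{k,i}(θ) = η*_i(θ) for all agents k, all times i ≥ 1, and all θ ∈ Θ, where the centralized recursion uses the joint likelihood L*(ξ_i|θ) = ∏_{k=1}^K L_k(ξ_{k,i}|θ). -/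
/-!
With `γ = K` and uniform weights `1/K`, the exponent applied to each likelihood in the adapt step
is undone by the geometric averaging: if every agent holds the same positive prior `η`, then
`exp (∑ ℓ, K⁻¹ * log (ψ ℓ θ)) = (∏ ℓ, L ℓ θ) * η θ * C` where `C`, coming from the agents' local
normalizing constants, does not depend on `θ`. Normalization removes `C`, so one diffusion step is
the centralized Bayes step with the product likelihood (`combine_adapt_eq_bayes`). The result
follows by induction on time, since the Bayes and evolve steps keep beliefs strictly positive
(every row of `T` having a positive entry) and the agents therefore stay in agreement.
-/

/-- (Evolve) Chapman–Kolmogorov step: `η(θ) = ∑_{θ'} T(θ|θ') μ(θ')`. -/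
noncomputable def evolve {Θ : Type*} [Fintype Θ] (T : Θ → Θ → ℝ) (μ : Θ → ℝ) : Θ → ℝ :=
  fun θ => ∑ θ' : Θ, T θ θ' * μ θ'

/-- (Adapt) `γ`-scaled Bayesian update:
`ψ(θ) = L(θ)^γ η(θ) / ∑_{θ'} L(θ')^γ η(θ')` (real power). -/
noncomputable def adapt {Θ : Type*} [Fintype Θ] (γ : ℝ) (L : Θ → ℝ) (η : Θ → ℝ) : Θ → ℝ :=
  fun θ => L θ ^ γ * η θ / ∑ θ' : Θ, L θ' ^ γ * η θ'

/-- (Combine) log-linear pooling of the neighbors' intermediate beliefs with weights `a ℓ`: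
`μ(θ) = exp(∑_ℓ a_ℓ log ψ_ℓ(θ)) / ∑_{θ'} exp(∑_ℓ a_ℓ log ψ_ℓ(θ'))`. -/
noncomputable def combine {Θ : Type*} [Fintype Θ] {K : ℕ} (a : Fin K → ℝ)
    (ψ : Fin K → Θ → ℝ) : Θ → ℝ :=
  fun θ => Real.exp (∑ ℓ, a ℓ * Real.log (ψ ℓ θ)) /
    ∑ θ' : Θ, Real.exp (∑ ℓ, a ℓ * Real.log (ψ ℓ θ'))

/-- Diffusion HMM beliefs `μ_{k,i}`: iterate of (Evolve)–(Adapt)–(Combine) started from the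
initial beliefs `μ0`, where `Lval i k θ = L_k(ξ_{k,i}|θ)` are the likelihood values of the
deterministic observation sequence and `A ℓ k = a_{ℓk}` is the combination matrix. -/
noncomputable def difIter {Θ : Type*} [Fintype Θ] {K : ℕ} (T : Θ → Θ → ℝ) (γ : ℝ)
    (A : Matrix (Fin K) (Fin K) ℝ) (Lval : ℕ → Fin K → Θ → ℝ) (μ0 : Fin K → Θ → ℝ) :
    ℕ → Fin K → Θ → ℝ
  | 0 => μ0
  | i + 1 => fun k =>
      combine (fun ℓ => A ℓ k)
        (fun ℓ => adapt γ (Lval (i + 1) ℓ) (evolve T (difIter T γ A Lval μ0 i ℓ)))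

/-- Optimal centralized Bayesian update: `μ(θ) = L(θ) η(θ) / ∑_{θ'} L(θ') η(θ')`. -/
noncomputable def bayes {Θ : Type*} [Fintype Θ] (L : Θ → ℝ) (η : Θ → ℝ) : Θ → ℝ :=
  fun θ => L θ * η θ / ∑ θ' : Θ, L θ' * η θ'

/-- Centralized HMM beliefs `μ*_i`: `η*_i(θ) = ∑_{θ'} T(θ|θ') μ*_{i-1}(θ')` and
`μ*_i(θ) = L*(ξ_i|θ) η*_i(θ) / ∑_{θ'} L*(ξ_i|θ') η*_i(θ')`, started from `μ0`, where
`Lval i θ = L*(ξ_i|θ)` is the joint likelihood of the deterministic observation sequence. -/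
noncomputable def centIter {Θ : Type*} [Fintype Θ] (T : Θ → Θ → ℝ) (Lval : ℕ → Θ → ℝ)
    (μ0 : Θ → ℝ) : ℕ → Θ → ℝ
  | 0 => μ0
  | i + 1 => bayes (Lval (i + 1)) (evolve T (centIter T Lval μ0 i))

theorem evolve_pos {Θ : Type*} [Fintype Θ] (T : Θ → Θ → ℝ) (hT0 : ∀ θ θ', 0 ≤ T θ θ')
    (hTpos : ∀ θ, ∃ θ', 0 < T θ θ') (μ : Θ → ℝ) (hμ : ∀ θ, 0 < μ θ) (θ : Θ) :
    0 < evolve T μ θ := by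
  obtain ⟨θ', h⟩ := hTpos θ
  exact Finset.sum_pos' (fun x _ => mul_nonneg (hT0 θ x) (hμ x).le)
    ⟨θ', Finset.mem_univ _, mul_pos h (hμ θ')⟩

theorem bayes_pos {Θ : Type*} [Fintype Θ] (L η : Θ → ℝ) (hL : ∀ θ, 0 < L θ)
    (hη : ∀ θ, 0 < η θ) (θ : Θ) : 0 < bayes L η θ :=
  div_pos (mul_pos (hL θ) (hη θ))
    (Finset.sum_pos (fun x _ => mul_pos (hL x) (hη x)) ⟨θ, Finset.mem_univ _⟩)

theorem centIter_pos {Θ : Type*} [Fintype Θ] (T : Θ → Θ → ℝ) (hT0 : ∀ θ θ', 0 ≤ T θ θ')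
    (hTpos : ∀ θ, ∃ θ', 0 < T θ θ') (L : ℕ → Θ → ℝ) (hL : ∀ i θ, 0 < L i θ)
    (μ0 : Θ → ℝ) (hμ0 : ∀ θ, 0 < μ0 θ) (i : ℕ) : ∀ θ, 0 < centIter T L μ0 i θ := by
  induction i with
  | zero => exact hμ0
  | succ i ih => exact bayes_pos _ _ (hL (i + 1)) (evolve_pos T hT0 hTpos _ ih)

/-- Agents sharing a positive prior `η` and pooling uniformly after a `K`-scaled adapt step
obtain the Bayes update of `η` with the product likelihood. -/
theorem combine_adapt_eq_bayes {Θ : Type*} [Fintype Θ] {K : ℕ} (hK : 0 < K)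
    (L : Fin K → Θ → ℝ) (hL : ∀ k θ, 0 < L k θ) (η : Θ → ℝ) (hη : ∀ θ, 0 < η θ) :
    combine (fun _ => (K : ℝ)⁻¹) (fun ℓ => adapt (K : ℝ) (L ℓ) η)
      = bayes (fun θ => ∏ k, L k θ) η := by
  have hK0 : (K : ℝ) ≠ 0 := by positivity
  -- The inverse geometric mean of the local normalizers is the `θ`-independent factor.
  obtain ⟨C, hC, key⟩ : ∃ C : ℝ, 0 < C ∧ ∀ θ,
      Real.exp (∑ ℓ, (K : ℝ)⁻¹ * Real.log (adapt (K : ℝ) (L ℓ) η θ))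
        = (∏ k, L k θ) * η θ * C := by
    refine ⟨Real.exp (-∑ ℓ, (K : ℝ)⁻¹ * Real.log (∑ θ', L ℓ θ' ^ (K : ℝ) * η θ')),
      Real.exp_pos _, fun θ => ?_⟩
    have hlog : ∀ ℓ, (K : ℝ)⁻¹ * Real.log (adapt (K : ℝ) (L ℓ) η θ)
        = Real.log (L ℓ θ) + (K : ℝ)⁻¹ * Real.log (η θ)
          - (K : ℝ)⁻¹ * Real.log (∑ θ', L ℓ θ' ^ (K : ℝ) * η θ') := by
      intro ℓ
      have hp : ∀ x, 0 < L ℓ x ^ (K : ℝ) := fun x => Real.rpow_pos_of_pos (hL ℓ x) _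
      have hZ : 0 < ∑ θ', L ℓ θ' ^ (K : ℝ) * η θ' :=
        Finset.sum_pos (fun x _ => mul_pos (hp x) (hη x)) ⟨θ, Finset.mem_univ _⟩
      rw [adapt, Real.log_div (mul_pos (hp θ) (hη θ)).ne' hZ.ne',
        Real.log_mul (hp θ).ne' (hη θ).ne', Real.log_rpow (hL ℓ θ)]
      field_simp
    simp only [hlog, Finset.sum_sub_distrib, Finset.sum_add_distrib, Finset.sum_const,
      Finset.card_univ, Fintype.card_fin, nsmul_eq_mul]
    rw [mul_inv_cancel_left₀ hK0, sub_eq_add_neg, Real.exp_add, Real.exp_add, Real.exp_sum,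
      Real.exp_log (hη θ)]
    simp only [Real.exp_log (hL _ θ)]
  funext θ
  simp only [combine, bayes, key]
  rw [← Finset.sum_mul, mul_div_mul_right _ _ hC.ne']

/-- Over a finite hypothesis set `Θ`, with a transition matrix `T` such that
for every `θ` there is `θ'` with `T(θ|θ') > 0`, `K` agents with strictly positive likelihood
values, the fully connected combination matrix `a_{ℓk} = 1/K`, step size `γ = K`, and common
strictly positive initial beliefs `μ_{k,0} = μ*_0`, the diffusion HMM beliefs coincide with the
centralized HMM beliefs at all times: `μ_{k,i}(θ) = μ*_i(θ)` and `η_{k,i}(θ) = η*_i(θ)` for all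
agents `k`, all times `i ≥ 1`, and all `θ ∈ Θ`, where the centralized recursion uses the joint
likelihood `L*(ξ_i|θ) = ∏_{k=1}^K L_k(ξ_{k,i}|θ)`. -/
theorem diffusion_hmm_matches_centralized {Θ : Type*} [Fintype Θ] {K : ℕ} (hK : 0 < K)
    (T : Θ → Θ → ℝ) (hT0 : ∀ θ θ', 0 ≤ T θ θ') (hT1 : ∀ θ', ∑ θ : Θ, T θ θ' = 1)
    (hTpos : ∀ θ, ∃ θ', 0 < T θ θ')
    (Lval : ℕ → Fin K → Θ → ℝ) (hL : ∀ i k θ, 0 < Lval i k θ)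
    (μ0star : Θ → ℝ) (hμ0pos : ∀ θ, 0 < μ0star θ) (hμ0sum : ∑ θ : Θ, μ0star θ = 1) :
    ∀ (i : ℕ) (k : Fin K) (θ : Θ),
      -- beliefs coincide: `μ_{k,i+1}(θ) = μ*_{i+1}(θ)`
      difIter T (K : ℝ) (Matrix.of fun _ _ => (K : ℝ)⁻¹) Lval (fun _ => μ0star) (i + 1) k θ
        = centIter T (fun j θ' => ∏ k' : Fin K, Lval j k' θ') μ0star (i + 1) θ ∧
      -- time-adjusted priors coincide: `η_{k,i+1}(θ) = η*_{i+1}(θ)`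
      evolve T (difIter T (K : ℝ) (Matrix.of fun _ _ => (K : ℝ)⁻¹) Lval
          (fun _ => μ0star) i k) θ
        = evolve T (centIter T (fun j θ' => ∏ k' : Fin K, Lval j k' θ') μ0star i) θ := by
  have main : ∀ i, difIter T (K : ℝ) (Matrix.of fun _ _ => (K : ℝ)⁻¹) Lval (fun _ => μ0star) i
      = fun _ => centIter T (fun j θ' => ∏ k' : Fin K, Lval j k' θ') μ0star i := by
    intro i
    induction i with
    | zero => rfl
    | succ i ih =>
      funext k
      simp only [difIter, centIter, ih, Matrix.of_apply]
      exact combine_adapt_eq_bayes hK (Lval (i + 1)) (hL (i + 1)) _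
        (evolve_pos T hT0 hTpos _ (centIter_pos T hT0 hTpos _
          (fun j θ => Finset.prod_pos fun k _ => hL j k θ) _ hμ0pos i))
  intro i k θ
  rw [main, main]
  exact ⟨rfl, rfl⟩
end

section
/- Let T be a transition matrix on the finite set Θ and let μ, ν be probability vectors on Θ with ν(θ) > 0 whenever μ(θ) > 0. Denote by μT the probability vector (μT)(θ) = ∑_{θ'} T(θ|θ') μ(θ'). Then the KL divergence contracts by the Dobrushin coefficient: D_KL(μT ‖ νT) ≤ κ(T) · D_KL(μ ‖ ν). -/
/-!
The Kullback–Leibler divergence is a mixture of hockey-stick divergences. For `0 ≤ p ≤ M * q`, `M ≥ 1`,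
`p log (p / q) - p + q = ∫_1^M (p/γ - q)⁺ dγ + ∫_0^1 (q - p/γ)⁺ dγ` (`hinge_integral`), so between
vectors of equal mass `D_KL` is the sum of these integrals over the states (`klDiv_eq_integral`).
It therefore suffices to contract `∑ (μ/γ - ν)⁺` for `γ ≥ 1` and `∑ (ν - μ/γ)⁺` for `γ ≤ 1`. In
both ranges the signed vector `s` inside the positive part has nonpositive total mass, and
`∑ (Ts)⁺ ≤ κ(T) ∑ s⁺` for every such `s` (`sum_posPart_le`): since `s⁻` carries at least the mass
of `s⁺`, one can pair each unit of `s⁺` with a unit of `s⁻`, and each pair `(i, j)` contributes at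
most `D_TV(T(·|i), T(·|j))`.
-/

/-- Kullback–Leibler divergence between probability vectors on a finite set:
`D_KL(p‖q) = ∑_θ p θ * log (p θ / q θ)` (with the convention `0 · log 0 = 0`,
which holds automatically since `Real.log 0 = 0`). -/
noncomputable def klDiv {Θ : Type*} [Fintype Θ] (p q : Θ → ℝ) : ℝ :=
  ∑ θ : Θ, p θ * Real.log (p θ / q θ)

/-- Total variation distance between probability vectors on a finite set:
`D_TV(p,q) = (1/2) ∑_θ |p θ - q θ|`. -/
noncomputable def dTV {Θ : Type*} [Fintype Θ] (p q : Θ → ℝ) : ℝ :=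
  (∑ θ : Θ, |p θ - q θ|) / 2

/-- Dobrushin coefficient of a transition matrix `T`, where `T θ θ'` is the probability of
moving from state `θ'` to state `θ`: `κ(T) = sup_{θ,θ'} D_TV(T(·|θ), T(·|θ'))`. -/
noncomputable def dobrushin {Θ : Type*} [Fintype Θ] (T : Θ → Θ → ℝ) : ℝ :=
  ⨆ θ : Θ, ⨆ θ' : Θ, dTV (fun x => T x θ) (fun x => T x θ')

open MeasureTheory

lemma dTV_le_dobrushin {Θ : Type*} [Fintype Θ] (T : Θ → Θ → ℝ) (i j : Θ) :
    dTV (fun x => T x i) (fun x => T x j) ≤ dobrushin T :=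
  le_ciSup_of_le (Set.finite_range _).bddAbove i
    (le_ciSup (f := fun j => dTV (fun x => T x i) (fun x => T x j))
      (Set.finite_range _).bddAbove j)

lemma sum_posPart_sub_eq_dTV {Θ : Type*} [Fintype Θ] (p q : Θ → ℝ)
    (h : ∑ x, p x = ∑ x, q x) : ∑ x, max (p x - q x) 0 = dTV p q := by
  have h1 : ∀ x, max (p x - q x) 0 = (|p x - q x| + (p x - q x)) / 2 := by
    intro x
    rcases le_total (p x - q x) 0 with h | h
    · rw [max_eq_right h, abs_of_nonpos h]; ring
    · rw [max_eq_left h, abs_of_nonneg h]; ring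
  simp only [h1, dTV, ← Finset.sum_div, Finset.sum_add_distrib, Finset.sum_sub_distrib, h]
  ring

/-- Contraction of the positive part of a signed vector of nonpositive mass. -/
lemma sum_posPart_le {Θ : Type*} [Fintype Θ] (T : Θ → Θ → ℝ)
    (hT0 : ∀ θ θ', 0 ≤ T θ θ') (hT1 : ∀ θ', ∑ θ : Θ, T θ θ' = 1)
    (s : Θ → ℝ) (hs : ∑ i, s i ≤ 0) :
    ∑ x, max (∑ i, T x i * s i) 0 ≤ dobrushin T * ∑ i, max (s i) 0 := by
  set u : Θ → ℝ := fun i => max (s i) 0 with hu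
  set v : Θ → ℝ := fun i => max (-s i) 0 with hv
  have hu0 : ∀ i, 0 ≤ u i := fun i => le_max_right _ _
  have hv0 : ∀ i, 0 ≤ v i := fun i => le_max_right _ _
  have hsuv : ∀ i, s i = u i - v i := by
    intro i
    simp only [hu, hv]
    rcases le_total (s i) 0 with h | h
    · rw [max_eq_right h, max_eq_left (by linarith)]; ring
    · rw [max_eq_left h, max_eq_right (by linarith)]; ring
  have hab : ∑ i, u i ≤ ∑ i, v i := by
    simp only [hsuv, Finset.sum_sub_distrib] at hs
    linarith
  rcases (Finset.sum_nonneg fun i _ => hv0 i : 0 ≤ ∑ i, v i).eq_or_lt with hb | hb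
  · have hua : ∑ i, u i = 0 :=
      le_antisymm (hb ▸ hab) (Finset.sum_nonneg fun i _ => hu0 i)
    have hu' := (Finset.sum_eq_zero_iff_of_nonneg fun i _ => hu0 i).1 hua
    have hv' := (Finset.sum_eq_zero_iff_of_nonneg fun i _ => hv0 i).1 hb.symm
    have hs0 : ∀ i, s i = 0 := fun i => by
      rw [hsuv, hu' i (Finset.mem_univ i), hv' i (Finset.mem_univ i), sub_zero]
    simp [hs0, hu]
  · have key : ∀ x, (∑ j, v j) * max (∑ i, T x i * s i) 0
        ≤ ∑ i, ∑ j, u i * v j * max (T x i - T x j) 0 := by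
      intro x
      have hdom : (∑ j, v j) * ∑ i, T x i * s i ≤ ∑ i, ∑ j, u i * v j * (T x i - T x j) := by
        have e1 : ∑ i, ∑ j, u i * v j * (T x i - T x j)
            = (∑ j, v j) * (∑ i, T x i * u i) - (∑ i, u i) * ∑ j, T x j * v j := by
          rw [mul_comm, Finset.sum_mul_sum, Finset.sum_mul_sum, ← Finset.sum_sub_distrib]
          refine Finset.sum_congr rfl fun i _ => ?_
          rw [← Finset.sum_sub_distrib]
          exact Finset.sum_congr rfl fun j _ => by ring
        have e2 : ∑ i, T x i * s i = (∑ i, T x i * u i) - ∑ i, T x i * v i := by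
          rw [← Finset.sum_sub_distrib]
          exact Finset.sum_congr rfl fun i _ => by rw [hsuv i]; ring
        have h3 : 0 ≤ ∑ i, T x i * v i :=
          Finset.sum_nonneg fun i _ => mul_nonneg (hT0 x i) (hv0 i)
        rw [e1, e2, mul_sub]
        have := mul_le_mul_of_nonneg_right hab h3
        linarith
      rw [mul_max_of_nonneg _ _ hb.le, mul_zero]
      refine max_le (hdom.trans ?_) ?_
      · exact Finset.sum_le_sum fun i _ => Finset.sum_le_sum fun j _ =>
          mul_le_mul_of_nonneg_left (le_max_left _ _) (mul_nonneg (hu0 i) (hv0 j))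
      · exact Finset.sum_nonneg fun i _ => Finset.sum_nonneg fun j _ =>
          mul_nonneg (mul_nonneg (hu0 i) (hv0 j)) (le_max_right _ _)
    have total : (∑ j, v j) * ∑ x, max (∑ i, T x i * s i) 0
        ≤ (∑ j, v j) * (dobrushin T * ∑ i, u i) := by
      rw [Finset.mul_sum]
      refine (Finset.sum_le_sum fun x _ => key x).trans ?_
      rw [Finset.sum_comm]
      calc ∑ i, ∑ x, ∑ j, u i * v j * max (T x i - T x j) 0
          = ∑ i, ∑ j, u i * v j * dTV (fun x => T x i) (fun x => T x j) := by
            refine Finset.sum_congr rfl fun i _ => ?_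
            rw [Finset.sum_comm]
            refine Finset.sum_congr rfl fun j _ => ?_
            rw [← Finset.mul_sum, sum_posPart_sub_eq_dTV (fun x => T x i) (fun x => T x j)
              ((hT1 i).trans (hT1 j).symm)]
        _ ≤ ∑ i, ∑ j, u i * v j * dobrushin T :=
            Finset.sum_le_sum fun i _ => Finset.sum_le_sum fun j _ =>
              mul_le_mul_of_nonneg_left (dTV_le_dobrushin T i j) (mul_nonneg (hu0 i) (hv0 j))
        _ = (∑ j, v j) * (dobrushin T * ∑ i, u i) := by
            simp only [← Finset.sum_mul, ← Finset.mul_sum]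
            ring
    exact le_of_mul_le_mul_left total hb

lemma intervalIntegrable_upper (p q : ℝ) {a b : ℝ} (ha : 0 < a) (hb : 0 < b) :
    IntervalIntegrable (fun γ : ℝ => max (p / γ - q) 0) volume a b := by
  refine ContinuousOn.intervalIntegrable ?_
  have : ∀ γ ∈ Set.uIcc a b, γ ≠ 0 := fun γ hγ =>
    ((lt_min ha hb).trans_le hγ.1).ne'
  fun_prop (disch := assumption)

/-- The integrand is bounded by `q`, so the singularity of `p / γ` at `0` is harmless. -/
lemma intervalIntegrable_lower {p q : ℝ} (hp : 0 ≤ p) (hq : 0 ≤ q) {a b : ℝ} (ha : 0 ≤ a)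
    (hb : 0 ≤ b) :
    IntervalIntegrable (fun γ : ℝ => max (q - p / γ) 0) volume a b := by
  refine (intervalIntegrable_const (c := q)).mono_fun (by fun_prop) ?_
  refine (ae_restrict_mem measurableSet_uIoc).mono fun γ hγ => ?_
  have hγ : 0 ≤ γ := (le_min ha hb).trans hγ.1.le
  simp only [Real.norm_eq_abs]
  rw [abs_of_nonneg (le_max_right _ _), abs_of_nonneg hq]
  exact max_le (by linarith [div_nonneg hp hγ]) hq

lemma integral_div_sub (p q : ℝ) {a b : ℝ} (ha : 0 < a) (hb : 0 < b) :
    ∫ γ in a..b, (p / γ - q) = p * Real.log (b / a) - q * (b - a) := by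
  have hi : IntervalIntegrable (fun γ : ℝ => γ⁻¹) volume a b :=
    intervalIntegrable_inv_iff.2
      (Or.inr fun h => ((lt_min ha hb).trans_le h.1).ne rfl)
  simp only [div_eq_mul_inv p]
  rw [intervalIntegral.integral_sub (hi.const_mul p) intervalIntegrable_const,
    intervalIntegral.integral_const_mul, integral_inv_of_pos ha hb,
    intervalIntegral.integral_const, smul_eq_mul]
  ring

/-- Representation of the relative-entropy summand as a mixture of hinge functions. -/
lemma hinge_integral {p q M : ℝ} (hp : 0 ≤ p) (hq : 0 ≤ q) (hM : 1 ≤ M) (h : p ≤ M * q) :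
    (∫ γ in (1 : ℝ)..M, max (p / γ - q) 0) + ∫ γ in (0 : ℝ)..1, max (q - p / γ) 0
      = p * Real.log (p / q) - p + q := by
  rcases hq.eq_or_lt with rfl | hq
  · have : p = 0 := le_antisymm (by simpa using h) hp
    subst this
    simp
  obtain ⟨x, rfl⟩ : ∃ x, p = x * q := ⟨p / q, by field_simp⟩
  have hx : 0 ≤ x := nonneg_of_mul_nonneg_left hp hq
  have hxM : x ≤ M := le_of_mul_le_mul_right h hq
  rw [mul_div_cancel_right₀ x hq.ne']
  -- The two hinges change sign at `γ = x`.
  have below : ∀ γ : ℝ, 0 < γ → γ ≤ x → q ≤ x * q / γ := fun γ h0 hγ => by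
    rw [le_div_iff₀ h0]; nlinarith
  have above : ∀ γ : ℝ, 0 < γ → x ≤ γ → x * q / γ ≤ q := fun γ h0 hγ => by
    rw [div_le_iff₀ h0]; nlinarith
  rcases le_total 1 x with h1 | h1
  · have hx0 : 0 < x := by linarith
    have e1 : ∫ γ in (0 : ℝ)..1, max (q - x * q / γ) 0 = ∫ γ in (0 : ℝ)..1, (0 : ℝ) := by
      refine intervalIntegral.integral_congr_ae (.of_forall fun γ hγ => ?_)
      rw [Set.uIoc_of_le zero_le_one] at hγ
      exact max_eq_right (by linarith [below γ hγ.1 (hγ.2.trans h1)])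
    have e2 : ∫ γ in (1 : ℝ)..x, max (x * q / γ - q) 0 = ∫ γ in (1 : ℝ)..x, (x * q / γ - q) := by
      refine intervalIntegral.integral_congr fun γ hγ => ?_
      rw [Set.uIcc_of_le h1] at hγ
      exact max_eq_left (by linarith [below γ (by linarith [hγ.1]) hγ.2])
    have e3 : ∫ γ in x..M, max (x * q / γ - q) 0 = ∫ γ in x..M, (0 : ℝ) := by
      refine intervalIntegral.integral_congr fun γ hγ => ?_
      rw [Set.uIcc_of_le hxM] at hγ
      exact max_eq_right (by linarith [above γ (by linarith [hγ.1]) hγ.1])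
    rw [← intervalIntegral.integral_add_adjacent_intervals
      (intervalIntegrable_upper (x * q) q one_pos hx0)
      (intervalIntegrable_upper (x * q) q hx0 (hx0.trans_le hxM)), e1, e2, e3,
      integral_div_sub _ _ one_pos hx0]
    simp
    ring
  · have e1 : ∫ γ in (1 : ℝ)..M, max (x * q / γ - q) 0 = ∫ γ in (1 : ℝ)..M, (0 : ℝ) := by
      refine intervalIntegral.integral_congr fun γ hγ => ?_
      rw [Set.uIcc_of_le hM] at hγ
      exact max_eq_right (by linarith [above γ (by linarith [hγ.1]) (h1.trans hγ.1)])
    rcases hx.eq_or_lt with rfl | hx0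
    · simp [hq.le]
    have e2 : ∫ γ in (0 : ℝ)..x, max (q - x * q / γ) 0 = ∫ γ in (0 : ℝ)..x, (0 : ℝ) := by
      refine intervalIntegral.integral_congr_ae (.of_forall fun γ hγ => ?_)
      rw [Set.uIoc_of_le hx] at hγ
      exact max_eq_right (by linarith [below γ hγ.1 hγ.2])
    have e3 : ∫ γ in x..1, max (q - x * q / γ) 0 = ∫ γ in x..1, -(x * q / γ - q) := by
      refine intervalIntegral.integral_congr fun γ hγ => ?_
      rw [Set.uIcc_of_le h1] at hγ
      simp only [neg_sub]
      exact max_eq_left (by linarith [above γ (by linarith [hγ.1]) hγ.1])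
    rw [← intervalIntegral.integral_add_adjacent_intervals
      (intervalIntegrable_lower hp hq.le le_rfl hx)
      (intervalIntegrable_lower hp hq.le hx zero_le_one), e1, e2, e3,
      intervalIntegral.integral_neg, integral_div_sub _ _ hx0 one_pos]
    simp
    ring

/-- The divergence between vectors of equal mass as an integral of hockey-stick divergences. -/
lemma klDiv_eq_integral {Θ : Type*} [Fintype Θ] {p q : Θ → ℝ} {M : ℝ} (hp : ∀ i, 0 ≤ p i)
    (hq : ∀ i, 0 ≤ q i) (hpq : ∑ i, p i = ∑ i, q i) (hM : 1 ≤ M) (h : ∀ i, p i ≤ M * q i) :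
    klDiv p q = (∫ γ in (1 : ℝ)..M, ∑ i, max (p i / γ - q i) 0)
      + ∫ γ in (0 : ℝ)..1, ∑ i, max (q i - p i / γ) 0 := by
  rw [intervalIntegral.integral_finsetSum fun i _ =>
      intervalIntegrable_upper (p i) (q i) one_pos (one_pos.trans_le hM),
    intervalIntegral.integral_finsetSum fun i _ =>
      intervalIntegrable_lower (hp i) (hq i) le_rfl zero_le_one, ← Finset.sum_add_distrib]
  simp only [hinge_integral (hp _) (hq _) hM (h _), Finset.sum_add_distrib,
    Finset.sum_sub_distrib, hpq, klDiv]
  ring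

/-- For a transition matrix `T` on a finite set `Θ` and probability vectors
`μ, ν` on `Θ` with `ν θ > 0` whenever `μ θ > 0`, the KL divergence contracts by the Dobrushin
coefficient: `D_KL(μT ‖ νT) ≤ κ(T) · D_KL(μ ‖ ν)`, where `(μT)(θ) = ∑_{θ'} T(θ|θ') μ(θ')`. -/
theorem klDiv_contraction {Θ : Type*} [Fintype Θ] (T : Θ → Θ → ℝ)
    (hT0 : ∀ θ θ', 0 ≤ T θ θ') (hT1 : ∀ θ', ∑ θ : Θ, T θ θ' = 1)
    (μ ν : Θ → ℝ)
    (hμ0 : ∀ θ, 0 ≤ μ θ) (hμ1 : ∑ θ : Θ, μ θ = 1)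
    (hν0 : ∀ θ, 0 ≤ ν θ) (hν1 : ∑ θ : Θ, ν θ = 1)
    (habs : ∀ θ, 0 < μ θ → 0 < ν θ) :
    klDiv (fun θ => ∑ θ' : Θ, T θ θ' * μ θ') (fun θ => ∑ θ' : Θ, T θ θ' * ν θ')
      ≤ dobrushin T * klDiv μ ν := by
  have hr : ∀ i, 0 ≤ μ i / ν i := fun i => div_nonneg (hμ0 i) (hν0 i)
  obtain ⟨M, hM, hμM⟩ : ∃ M : ℝ, 1 ≤ M ∧ ∀ i, μ i ≤ M * ν i := by
    refine ⟨1 + ∑ i, μ i / ν i, by linarith [Finset.sum_nonneg fun i (_ : i ∈ Finset.univ) => hr i],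
      fun i => ?_⟩
    rcases (hμ0 i).eq_or_lt with h | h
    · rw [← h]
      exact mul_nonneg (by linarith [Finset.sum_nonneg fun i (_ : i ∈ Finset.univ) => hr i]) (hν0 i)
    · rw [← div_le_iff₀ (habs i h)]
      linarith [Finset.single_le_sum (fun i _ => hr i) (Finset.mem_univ i)]
  have hmass : ∀ p : Θ → ℝ, ∑ x, ∑ i, T x i * p i = ∑ i, p i := fun p => by
    rw [Finset.sum_comm]
    simp only [← Finset.sum_mul, hT1, one_mul]
  have hTμ0 : ∀ x, 0 ≤ ∑ i, T x i * μ i := fun x =>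
    Finset.sum_nonneg fun i _ => mul_nonneg (hT0 x i) (hμ0 i)
  have hTν0 : ∀ x, 0 ≤ ∑ i, T x i * ν i := fun x =>
    Finset.sum_nonneg fun i _ => mul_nonneg (hT0 x i) (hν0 i)
  have hTM : ∀ x, ∑ i, T x i * μ i ≤ M * ∑ i, T x i * ν i := fun x => by
    rw [Finset.mul_sum]
    refine Finset.sum_le_sum fun i _ => ?_
    calc T x i * μ i ≤ T x i * (M * ν i) := mul_le_mul_of_nonneg_left (hμM i) (hT0 x i)
      _ = M * (T x i * ν i) := by ring
  have hM0 : 0 < M := one_pos.trans_le hM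
  have sumU : ∀ p q : Θ → ℝ, IntervalIntegrable
      (fun γ : ℝ => ∑ i, max (p i / γ - q i) 0) volume 1 M := fun p q =>
    by simpa only [Finset.sum_fn] using IntervalIntegrable.sum Finset.univ fun i _ =>
      intervalIntegrable_upper (p i) (q i) one_pos hM0
  have sumL : ∀ p q : Θ → ℝ, (∀ i, 0 ≤ p i) → (∀ i, 0 ≤ q i) → IntervalIntegrable
      (fun γ : ℝ => ∑ i, max (q i - p i / γ) 0) volume 0 1 := fun p q hp hq =>
    by simpa only [Finset.sum_fn] using IntervalIntegrable.sum Finset.univ fun i _ =>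
      intervalIntegrable_lower (hp i) (hq i) le_rfl zero_le_one
  rw [klDiv_eq_integral hTμ0 hTν0 (by rw [hmass, hmass, hμ1, hν1]) hM hTM,
    klDiv_eq_integral hμ0 hν0 (hμ1.trans hν1.symm) hM hμM, mul_add,
    ← intervalIntegral.integral_const_mul, ← intervalIntegral.integral_const_mul]
  refine add_le_add ?_ ?_
  · refine intervalIntegral.integral_mono_on_of_le_Ioo hM (sumU _ _) ((sumU _ _).const_mul _)
      fun γ hγ => ?_
    have hle : ∑ i, (μ i / γ - ν i) ≤ 0 := by
      rw [Finset.sum_sub_distrib, ← Finset.sum_div, hμ1, hν1, sub_nonpos]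
      exact (div_le_one (one_pos.trans hγ.1)).2 hγ.1.le
    convert sum_posPart_le T hT0 hT1 _ hle using 4
    rw [Finset.sum_div, ← Finset.sum_sub_distrib]
    exact Finset.sum_congr rfl fun i _ => by ring
  · refine intervalIntegral.integral_mono_on_of_le_Ioo zero_le_one (sumL _ _ hTμ0 hTν0)
      ((sumL _ _ hμ0 hν0).const_mul _) fun γ hγ => ?_
    have hle : ∑ i, (ν i - μ i / γ) ≤ 0 := by
      rw [Finset.sum_sub_distrib, ← Finset.sum_div, hμ1, hν1, sub_nonpos]
      exact (one_le_div hγ.1).2 hγ.2.le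
    convert sum_posPart_le T hT0 hT1 _ hle using 4
    rw [Finset.sum_div, ← Finset.sum_sub_distrib]
    exact Finset.sum_congr rfl fun i _ => by ring
end
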